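/- Finiteness of the type transition system: for any two cherry-pi session types T1 and T2, the set of type configurations reachable via |-->* from the initial configuration init(T1,T2)[T1 > T1 || T2 > T2] is finite; consequently, checking compliance T1 -|| T2 reduces to inspecting the finitely many reachable configurations without |-->-successors. -/

import Mathlib

set_option autoImplicit true

abbrev Name := String

inductive CSort | bool | int | str
deriving DecidableEq

/-! ## Session types -/

/-- cherry-pi session types. `done` renders the type `end` (successful
termination) and `err` the faulty termination type. -/
inductive SType
| out : CSort → SType → SType
| inp : CSort → SType → SType
| sel : Name → SType → SType
| brn : List (Name × SType) → SType
| choice : SType → SType → SType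
| tvar : Name → SType
| mu : Name → SType → SType
| done : SType
| err : SType
| cmt : SType → SType
| roll : SType
| abt : SType

/-- Substitution of a session type `U` for a type variable `t`. -/
def SType.subst (t : Name) (U : SType) (T : SType) : SType :=
  match T with
  | .out S T => .out S (SType.subst t U T)
  | .inp S T => .inp S (SType.subst t U T)
  | .sel l T => .sel l (SType.subst t U T)
  | .brn bs => .brn (bs.attach.map (fun b => (b.1.1, SType.subst t U b.1.2)))
  | .choice T1 T2 => .choice (SType.subst t U T1) (SType.subst t U T2)
  | .tvar u => if u = t then U else .tvar u
  | .mu u T => if u = t then .mu u T else .mu u (SType.subst t U T)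
  | .done => .done
  | .err => .err
  | .cmt T => .cmt (SType.subst t U T)
  | .roll => .roll
  | .abt => .abt
termination_by sizeOf T
decreasing_by
  all_goals simp_wf
  all_goals try omega
  all_goals
    (have h1 := List.sizeOf_lt_of_mem b.2
     obtain ⟨⟨l, P⟩, hb⟩ := b
     simp_all
     omega)

/-- Labels of the semantics of types. -/
inductive TLabel
| out : CSort → TLabel
| inp : CSort → TLabel
| sel : Name → TLabel
| brn : Name → TLabel
| tau : TLabel
| cmt : TLabel
| roll : TLabel
| abt : TLabel

/-- The labelled semantics of session types (rules [TS-Snd], [TS-Rcv],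
[TS-Sel], [TS-Br], [TS-If1], [TS-If2], [TS-rec], [TS-Cmt], [TS-Rll], [TS-Abt]). -/
inductive TStep : SType → TLabel → SType → Prop
| out : TStep (.out S T) (.out S) T
| inp : TStep (.inp S T) (.inp S) T
| sel : TStep (.sel l T) (.sel l) T
| brn : (l, T) ∈ bs → TStep (.brn bs) (.brn l) T
| choiceL : TStep (.choice T1 T2) .tau T1
| choiceR : TStep (.choice T1 T2) .tau T2
| unfold : TStep (SType.subst t (.mu t T) T) lab T' → TStep (.mu t T) lab T'
| cmt : TStep (.cmt T) .cmt T
| roll : TStep .roll .roll .done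
| abt : TStep .abt .abt .done

/-- Checkpoint types: either a checkpoint `ckp T` committed by the party
itself, or a checkpoint `ickp T` imposed by the other party. -/
inductive CkpT
| ckp : SType → CkpT
| ickp : SType → CkpT

/-- The underlying type of a checkpoint type. -/
def CkpT.ty : CkpT → SType
| .ckp T => T
| .ickp T => T

/-- Type configurations `init(T,T')[ ckpL > curL || ckpR > curR ]`. -/
structure TConf where
  initL : SType
  initR : SType
  ckpL : CkpT
  curL : SType
  ckpR : CkpT
  curR : SType

/-- Swapping the two parties of a type configuration. -/
def TConf.swap (c : TConf) : TConf :=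
  ⟨c.initR, c.initL, c.ckpR, c.curR, c.ckpL, c.curL⟩

/-- The reduction relation `|-->` on type configurations (rules [TS-Tau],
[TS-Com], [TS-Lab], [TS-Cmt1], [TS-Cmt2], [TS-Rll1], [TS-Rll2], [TS-Abt1],
together with their symmetric versions). -/
inductive TCRed : TConf → TConf → Prop
| tau : TStep T1 .tau T1' →
    TCRed ⟨T, T', K1, T1, K2, T2⟩ ⟨T, T', K1, T1', K2, T2⟩
| com : TStep T1 (.out S) T1' → TStep T2 (.inp S) T2' →
    TCRed ⟨T, T', K1, T1, K2, T2⟩ ⟨T, T', K1, T1', K2, T2'⟩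
| lab : TStep T1 (.sel l) T1' → TStep T2 (.brn l) T2' →
    TCRed ⟨T, T', K1, T1, K2, T2⟩ ⟨T, T', K1, T1', K2, T2'⟩
| cmt1 : TStep T1 .cmt T1' → K2 ≠ CkpT.ckp T2 →
    TCRed ⟨T, T', K1, T1, K2, T2⟩ ⟨T, T', .ckp T1', T1', .ickp T2, T2⟩
| cmt2 : TStep T1 .cmt T1' → K2 = CkpT.ckp T2 →
    TCRed ⟨T, T', K1, T1, K2, T2⟩ ⟨T, T', .ckp T1', T1', K2, T2⟩
| rll1 : TStep T1 .roll T1'' →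
    TCRed ⟨T, T', .ckp U1, T1, K2, T2⟩ ⟨T, T', .ckp U1, U1, K2, K2.ty⟩
| rll2 : TStep T1 .roll T1'' →
    TCRed ⟨T, T', .ickp U1, T1, K2, T2⟩ ⟨T, T', .ickp U1, .err, K2, .err⟩
| abt1 : TStep T1 .abt T1'' →
    TCRed ⟨T, T', K1, T1, K2, T2⟩ ⟨T, T', .ckp T, T, .ckp T', T'⟩
| symm : TCRed c1 c2 → TCRed c1.swap c2.swap

/-- The initial type configuration `init(T1,T2)[T1 > T1 || T2 > T2]`. -/
def initConf (T1 T2 : SType) : TConf := ⟨T1, T2, .ckp T1, T1, .ckp T2, T2⟩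

/-- Compliance of two session types: every configuration reachable from the
initial configuration and without `|-->`-successors is in the successful
(`end`) state on both sides. -/
def Compliant (T1 T2 : SType) : Prop :=
  ∀ c, Relation.ReflTransGen TCRed (initConf T1 T2) c →
    (∀ c', ¬ TCRed c c') → c.curL = SType.done ∧ c.curR = SType.done


/-! ## Proof -/

theorem SType.ind {P : SType → Prop}
    (hout : ∀ S T, P T → P (.out S T)) (hinp : ∀ S T, P T → P (.inp S T))
    (hsel : ∀ l T, P T → P (.sel l T))
    (hbrn : ∀ bs : List (Name × SType), (∀ b ∈ bs, P b.2) → P (.brn bs))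
    (hch : ∀ T U, P T → P U → P (.choice T U))
    (hvar : ∀ x, P (.tvar x)) (hmu : ∀ x T, P T → P (.mu x T))
    (hdone : P .done) (herr : P .err) (hcmt : ∀ T, P T → P (.cmt T))
    (hroll : P .roll) (habt : P .abt) (T : SType) : P T :=
  SType.rec (motive_1 := P) (motive_2 := fun bs => ∀ b ∈ bs, P b.2) (motive_3 := fun b => P b.2)
    hout hinp hsel hbrn hch hvar hmu hdone herr hcmt hroll habt
    (by simp)
    (fun b bs h1 h2 c hc => by
      rcases List.mem_cons.1 hc with rfl | h
      · exact h1
      · exact h2 c h)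
    (fun _ _ h => h) T

/-- Simultaneous (capturing) substitution. -/
def SType.ssub (σ : Name → SType) (T : SType) : SType :=
  match T with
  | .out S T => .out S (SType.ssub σ T)
  | .inp S T => .inp S (SType.ssub σ T)
  | .sel l T => .sel l (SType.ssub σ T)
  | .brn bs => .brn (bs.attach.map (fun b => (b.1.1, SType.ssub σ b.1.2)))
  | .choice T1 T2 => .choice (SType.ssub σ T1) (SType.ssub σ T2)
  | .tvar u => σ u
  | .mu u T => .mu u (SType.ssub (Function.update σ u (.tvar u)) T)
  | .done => .done
  | .err => .err
  | .cmt T => .cmt (SType.ssub σ T)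
  | .roll => .roll
  | .abt => .abt
termination_by sizeOf T
decreasing_by
  all_goals simp_wf
  all_goals try omega
  all_goals
    (have h1 := List.sizeOf_lt_of_mem b.2
     obtain ⟨⟨l, P⟩, hb⟩ := b
     simp_all
     omega)

/-- Free variables. -/
inductive FV (x : Name) : SType → Prop
| out : FV x T → FV x (.out S T)
| inp : FV x T → FV x (.inp S T)
| sel : FV x T → FV x (.sel l T)
| brn {b : Name × SType} : b ∈ bs → FV x b.2 → FV x (.brn bs)
| chL : FV x T → FV x (.choice T U)
| chR : FV x U → FV x (.choice T U)
| var : FV x (.tvar x)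
| mu : x ≠ u → FV x T → FV x (.mu u T)
| cmt : FV x T → FV x (.cmt T)

theorem ssub_brn (σ : Name → SType) (bs : List (Name × SType)) :
    SType.ssub σ (.brn bs) = .brn (bs.map (fun b => (b.1, SType.ssub σ b.2))) := by
  rw [SType.ssub]
  congr 1
  exact List.attach_map_val (l := bs) (f := fun b : Name × SType => (b.1, SType.ssub σ b.2))

theorem subst_brn (t : Name) (U : SType) (bs : List (Name × SType)) :
    SType.subst t U (.brn bs) = .brn (bs.map (fun b => (b.1, SType.subst t U b.2))) := by
  rw [SType.subst]
  congr 1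
  exact List.attach_map_val (l := bs) (f := fun b : Name × SType => (b.1, SType.subst t U b.2))

theorem map_snd_id (f : SType → SType) (bs : List (Name × SType))
    (h : ∀ b ∈ bs, f b.2 = b.2) : bs.map (fun b => (b.1, f b.2)) = bs := by
  conv_rhs => rw [← List.map_id bs]
  apply List.map_congr_left
  intro b hb
  simp [h b hb]

theorem subst_not_fv (t : Name) (U T : SType) : ¬ FV t T → SType.subst t U T = T := by
  induction T using SType.ind with
  | hout S T ih => intro h; rw [SType.subst, ih (fun k => h (.out k))]
  | hinp S T ih => intro h; rw [SType.subst, ih (fun k => h (.inp k))]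
  | hsel S T ih => intro h; rw [SType.subst, ih (fun k => h (.sel k))]
  | hcmt T ih => intro h; rw [SType.subst, ih (fun k => h (.cmt k))]
  | hch T V ih1 ih2 =>
    intro h; rw [SType.subst, ih1 (fun k => h (.chL k)), ih2 (fun k => h (.chR k))]
  | hbrn bs ih =>
    intro h
    rw [subst_brn, map_snd_id]
    intro b hb
    exact ih b hb (fun k => h (.brn hb k))
  | hvar x =>
    intro h
    rw [SType.subst, if_neg]
    rintro rfl
    exact h .var
  | hmu x T ih =>
    intro h
    rw [SType.subst]
    split_ifs with hx
    · rfl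
    · rw [ih (fun k => h (.mu (fun e => hx e.symm) k))]
  | hdone => intro _; rw [SType.subst]
  | herr => intro _; rw [SType.subst]
  | hroll => intro _; rw [SType.subst]
  | habt => intro _; rw [SType.subst]

theorem ssub_id (T : SType) : ∀ σ : Name → SType, (∀ x, FV x T → σ x = .tvar x) →
    SType.ssub σ T = T := by
  induction T using SType.ind with
  | hout S T ih => intro σ h; rw [SType.ssub, ih σ (fun x k => h x (.out k))]
  | hinp S T ih => intro σ h; rw [SType.ssub, ih σ (fun x k => h x (.inp k))]
  | hsel S T ih => intro σ h; rw [SType.ssub, ih σ (fun x k => h x (.sel k))]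
  | hcmt T ih => intro σ h; rw [SType.ssub, ih σ (fun x k => h x (.cmt k))]
  | hch T V ih1 ih2 =>
    intro σ h
    rw [SType.ssub, ih1 σ (fun x k => h x (.chL k)), ih2 σ (fun x k => h x (.chR k))]
  | hbrn bs ih =>
    intro σ h
    rw [ssub_brn, map_snd_id]
    intro b hb
    exact ih b hb σ (fun x k => h x (.brn hb k))
  | hvar x =>
    intro σ h
    rw [SType.ssub]; exact h x .var
  | hmu u T ih =>
    intro σ h
    rw [SType.ssub, ih]
    intro x hx
    by_cases e : x = u
    · subst e; simp
    · rw [Function.update_of_ne e]; exact h x (.mu e hx)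
  | hdone => intro _ _; rw [SType.ssub]
  | herr => intro _ _; rw [SType.ssub]
  | hroll => intro _ _; rw [SType.ssub]
  | habt => intro _ _; rw [SType.ssub]

theorem subst_ssub (u : Name) (N T : SType) : ∀ σ : Name → SType, σ u = .tvar u →
    (∀ x, x ≠ u → ¬ FV u (σ x)) →
    SType.subst u N (SType.ssub σ T) = SType.ssub (Function.update σ u N) T := by
  induction T using SType.ind with
  | hout S T ih => intro σ h k; rw [SType.ssub, SType.ssub, SType.subst, ih σ h k]
  | hinp S T ih => intro σ h k; rw [SType.ssub, SType.ssub, SType.subst, ih σ h k]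
  | hsel S T ih => intro σ h k; rw [SType.ssub, SType.ssub, SType.subst, ih σ h k]
  | hcmt T ih => intro σ h k; rw [SType.ssub, SType.ssub, SType.subst, ih σ h k]
  | hch T V ih1 ih2 =>
    intro σ h k; rw [SType.ssub, SType.ssub, SType.subst, ih1 σ h k, ih2 σ h k]
  | hbrn bs ih =>
    intro σ h k
    rw [ssub_brn, ssub_brn, subst_brn, List.map_map]
    congr 1
    apply List.map_congr_left
    intro b hb
    simp [ih b hb σ h k]
  | hvar x =>
    intro σ h k
    rw [SType.ssub, SType.ssub]
    by_cases e : x = u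
    · subst e; rw [h, SType.subst]; simp
    · rw [Function.update_of_ne e, subst_not_fv _ _ _ (k x e)]
  | hmu v T ih =>
    intro σ h k
    rw [SType.ssub, SType.ssub, SType.subst]
    split_ifs with e
    · subst e; simp
    · rw [ih, Function.update_comm e]
      · rw [Function.update_of_ne (fun c => e c.symm)]; exact h
      · intro x hx
        by_cases c : x = v
        · subst c
          rw [Function.update_self]
          intro hf
          cases hf
          exact hx rfl
        · rw [Function.update_of_ne c]; exact k x hx
  | hdone => intro _ _ _; rw [SType.ssub, SType.ssub, SType.subst]
  | herr => intro _ _ _; rw [SType.ssub, SType.ssub, SType.subst]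
  | hroll => intro _ _ _; rw [SType.ssub, SType.ssub, SType.subst]
  | habt => intro _ _ _; rw [SType.ssub, SType.ssub, SType.subst]

theorem fv_ssub (T : SType) : ∀ (σ : Name → SType) (F : Set Name),
    (∀ x y, FV y (σ x) → y ∈ F) → ∀ y, FV y (SType.ssub σ T) → y ∈ F := by
  induction T using SType.ind with
  | hout S T ih => intro σ F h y hy; rw [SType.ssub] at hy; cases hy with | out k => exact ih σ F h y k
  | hinp S T ih => intro σ F h y hy; rw [SType.ssub] at hy; cases hy with | inp k => exact ih σ F h y k
  | hsel S T ih => intro σ F h y hy; rw [SType.ssub] at hy; cases hy with | sel k => exact ih σ F h y k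
  | hcmt T ih => intro σ F h y hy; rw [SType.ssub] at hy; cases hy with | cmt k => exact ih σ F h y k
  | hch T V ih1 ih2 =>
    intro σ F h y hy; rw [SType.ssub] at hy
    cases hy with
    | chL k => exact ih1 σ F h y k
    | chR k => exact ih2 σ F h y k
  | hbrn bs ih =>
    intro σ F h y hy; rw [ssub_brn] at hy
    cases hy with
    | brn hb k =>
      obtain ⟨b, hm, rfl⟩ := List.mem_map.1 hb
      exact ih b hm σ F h y k
  | hvar x => intro σ F h y hy; rw [SType.ssub] at hy; exact h x y hy
  | hmu u T ih =>
    intro σ F h y hy; rw [SType.ssub] at hy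
    cases hy with
    | mu hne k =>
      have := ih _ (insert u F) ?_ y k
      · exact this.resolve_left hne
      · intro x z hz
        by_cases c : x = u
        · subst c
          rw [Function.update_self] at hz
          cases hz
          exact Or.inl rfl
        · rw [Function.update_of_ne c] at hz; exact Or.inr (h x z hz)
  | hdone => intro σ F h y hy; rw [SType.ssub] at hy; cases hy
  | herr => intro σ F h y hy; rw [SType.ssub] at hy; cases hy
  | hroll => intro σ F h y hy; rw [SType.ssub] at hy; cases hy
  | habt => intro σ F h y hy; rw [SType.ssub] at hy; cases hy

theorem fv_subst (t : Name) (U T : SType) : ∀ y, FV y (SType.subst t U T) →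
    FV y U ∨ (FV y T ∧ y ≠ t) := by
  induction T using SType.ind with
  | hout S T ih =>
    intro y hy; rw [SType.subst] at hy
    cases hy with | out k => exact (ih y k).imp id (fun a => ⟨.out a.1, a.2⟩)
  | hinp S T ih =>
    intro y hy; rw [SType.subst] at hy
    cases hy with | inp k => exact (ih y k).imp id (fun a => ⟨.inp a.1, a.2⟩)
  | hsel S T ih =>
    intro y hy; rw [SType.subst] at hy
    cases hy with | sel k => exact (ih y k).imp id (fun a => ⟨.sel a.1, a.2⟩)
  | hcmt T ih =>
    intro y hy; rw [SType.subst] at hy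
    cases hy with | cmt k => exact (ih y k).imp id (fun a => ⟨.cmt a.1, a.2⟩)
  | hch T V ih1 ih2 =>
    intro y hy; rw [SType.subst] at hy
    cases hy with
    | chL k => exact (ih1 y k).imp id (fun a => ⟨.chL a.1, a.2⟩)
    | chR k => exact (ih2 y k).imp id (fun a => ⟨.chR a.1, a.2⟩)
  | hbrn bs ih =>
    intro y hy; rw [subst_brn] at hy
    cases hy with
    | brn hb k =>
      obtain ⟨b, hm, rfl⟩ := List.mem_map.1 hb
      exact (ih b hm y k).imp id (fun a => ⟨.brn hm a.1, a.2⟩)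
  | hvar x =>
    intro y hy; rw [SType.subst] at hy
    split_ifs at hy with e
    · exact Or.inl hy
    · cases hy; exact Or.inr ⟨.var, e⟩
  | hmu u T ih =>
    intro y hy; rw [SType.subst] at hy
    split_ifs at hy with e
    · subst e
      cases hy with | mu hne k => exact Or.inr ⟨.mu hne k, hne⟩
    · cases hy with
      | mu hne k => exact (ih y k).imp id (fun a => ⟨.mu hne a.1, a.2⟩)
  | hdone => intro y hy; rw [SType.subst] at hy; cases hy
  | herr => intro y hy; rw [SType.subst] at hy; cases hy
  | hroll => intro y hy; rw [SType.subst] at hy; cases hy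
  | habt => intro y hy; rw [SType.subst] at hy; cases hy

theorem fv_finite (T : SType) : ∃ F : Finset Name, ∀ x, FV x T → x ∈ F := by
  induction T using SType.ind with
  | hout S T ih => obtain ⟨F, h⟩ := ih; exact ⟨F, fun x hx => by cases hx with | out k => exact h x k⟩
  | hinp S T ih => obtain ⟨F, h⟩ := ih; exact ⟨F, fun x hx => by cases hx with | inp k => exact h x k⟩
  | hsel S T ih => obtain ⟨F, h⟩ := ih; exact ⟨F, fun x hx => by cases hx with | sel k => exact h x k⟩
  | hcmt T ih => obtain ⟨F, h⟩ := ih; exact ⟨F, fun x hx => by cases hx with | cmt k => exact h x k⟩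
  | hmu u T ih => obtain ⟨F, h⟩ := ih; exact ⟨F, fun x hx => by cases hx with | mu _ k => exact h x k⟩
  | hch T V ih1 ih2 =>
    obtain ⟨F, h⟩ := ih1
    obtain ⟨G, k⟩ := ih2
    refine ⟨F ∪ G, fun x hx => ?_⟩
    cases hx with
    | chL a => exact Finset.mem_union_left _ (h x a)
    | chR a => exact Finset.mem_union_right _ (k x a)
  | hbrn bs ih =>
    classical
    choose! f hf using ih
    refine ⟨bs.toFinset.attach.biUnion (fun b => f b.1), fun x hx => ?_⟩
    cases hx with
    | brn hb k =>
      rw [Finset.mem_biUnion]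
      exact ⟨⟨_, List.mem_toFinset.2 hb⟩, Finset.mem_attach _ _, hf _ hb x k⟩
  | hvar x => exact ⟨{x}, fun y hy => by cases hy; simp⟩
  | hdone => exact ⟨∅, fun y hy => by cases hy⟩
  | herr => exact ⟨∅, fun y hy => by cases hy⟩
  | hroll => exact ⟨∅, fun y hy => by cases hy⟩
  | habt => exact ⟨∅, fun y hy => by cases hy⟩

/-- Derivative relation; binders in `F` are not unfolded. -/
inductive Der (F : Set Name) : SType → SType → Prop
| out : Der F (.out S T) T
| inp : Der F (.inp S T) T
| sel : Der F (.sel l T) T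
| brn {b : Name × SType} : b ∈ bs → Der F (.brn bs) b.2
| chL : Der F (.choice T U) T
| chR : Der F (.choice T U) U
| mu : u ∉ F → Der F (.mu u T) (SType.subst u (.mu u T) T)
| cmt : Der F (.cmt T) T

theorem der_one {F : Set Name} {R : Set SType} {A B : SType}
    (hs : ∀ Z, Der F A Z → Z = B)
    (h : ∃ X : Set SType, X.Finite ∧ B ∈ X ∪ R ∧ ∀ Y ∈ X, ∀ Z, Der F Y Z → Z ∈ X ∪ R) :
    ∃ X : Set SType, X.Finite ∧ A ∈ X ∪ R ∧ ∀ Y ∈ X, ∀ Z, Der F Y Z → Z ∈ X ∪ R := by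
  obtain ⟨X, hX, hB, hc⟩ := h
  refine ⟨insert A X, hX.insert A, Or.inl (Or.inl rfl), ?_⟩
  have hsub : X ∪ R ⊆ insert A X ∪ R := Set.union_subset_union_left _ (Set.subset_insert _ _)
  rintro Y (rfl | hY) Z hZ
  · rw [hs Z hZ]; exact hsub hB
  · exact hsub (hc Y hY Z hZ)

theorem der_zero {F : Set Name} {R : Set SType} {A : SType}
    (hs : ∀ Z, ¬ Der F A Z) :
    ∃ X : Set SType, X.Finite ∧ A ∈ X ∪ R ∧ ∀ Y ∈ X, ∀ Z, Der F Y Z → Z ∈ X ∪ R := by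
  refine ⟨{A}, Set.finite_singleton A, Or.inl rfl, ?_⟩
  rintro Y rfl Z hZ
  exact absurd hZ (hs Z)

theorem der_fin (F : Set Name) (T : SType) : ∀ σ : Name → SType,
    (∀ x y, FV y (σ x) → y ∈ F) →
    ∃ X : Set SType, X.Finite ∧ SType.ssub σ T ∈ X ∪ Set.range σ ∧
      ∀ Y ∈ X, ∀ Z, Der F Y Z → Z ∈ X ∪ Set.range σ := by
  induction T using SType.ind with
  | hout S T ih =>
    intro σ h; rw [SType.ssub]
    exact der_one (fun Z hZ => by cases hZ; rfl) (ih σ h)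
  | hinp S T ih =>
    intro σ h; rw [SType.ssub]
    exact der_one (fun Z hZ => by cases hZ; rfl) (ih σ h)
  | hsel S T ih =>
    intro σ h; rw [SType.ssub]
    exact der_one (fun Z hZ => by cases hZ; rfl) (ih σ h)
  | hcmt T ih =>
    intro σ h; rw [SType.ssub]
    exact der_one (fun Z hZ => by cases hZ; rfl) (ih σ h)
  | hch T V ih1 ih2 =>
    intro σ h; rw [SType.ssub]
    obtain ⟨X1, f1, m1, c1⟩ := ih1 σ h
    obtain ⟨X2, f2, m2, c2⟩ := ih2 σ h
    refine ⟨insert (.choice (SType.ssub σ T) (SType.ssub σ V)) (X1 ∪ X2), (f1.union f2).insert _,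
      Or.inl (Or.inl rfl), ?_⟩
    have s1 : ∀ Z ∈ X1 ∪ Set.range σ,
      Z ∈ insert (.choice (SType.ssub σ T) (SType.ssub σ V)) (X1 ∪ X2) ∪ Set.range σ :=
      fun Z hZ => hZ.imp (fun a => Or.inr (Or.inl a)) id
    have s2 : ∀ Z ∈ X2 ∪ Set.range σ,
      Z ∈ insert (.choice (SType.ssub σ T) (SType.ssub σ V)) (X1 ∪ X2) ∪ Set.range σ :=
      fun Z hZ => hZ.imp (fun a => Or.inr (Or.inr a)) id
    rintro Y (rfl | hY | hY) Z hZ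
    · cases hZ
      · exact s1 _ m1
      · exact s2 _ m2
    · exact s1 _ (c1 Y hY Z hZ)
    · exact s2 _ (c2 Y hY Z hZ)
  | hbrn bs ih =>
    intro σ h; rw [ssub_brn]
    have ih' := fun b hb => ih b hb σ h
    choose! X f m c using ih'
    set A := SType.brn (bs.map (fun b => (b.1, SType.ssub σ b.2))) with hA
    refine ⟨insert A (⋃ b ∈ {b | b ∈ bs}, X b),
      (Set.Finite.biUnion (List.finite_toSet bs) f).insert _, Or.inl (Or.inl rfl), ?_⟩
    have s : ∀ b ∈ bs, ∀ Z ∈ X b ∪ Set.range σ,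
        Z ∈ insert A (⋃ b ∈ {b | b ∈ bs}, X b) ∪ Set.range σ :=
      fun b hb Z hZ => hZ.imp (fun a => Or.inr (Set.mem_biUnion (show b ∈ {b | b ∈ bs} from hb) a)) id
    rintro Y (rfl | hY) Z hZ
    · rw [hA] at hZ
      cases hZ with
      | brn hb =>
        obtain ⟨b, hm, rfl⟩ := List.mem_map.1 hb
        exact s b hm _ (m b hm)
    · obtain ⟨b, hb, hY⟩ := Set.mem_iUnion₂.1 hY
      exact s b hb Z (c b hb Y hY Z hZ)
  | hvar x =>
    intro σ h; rw [SType.ssub]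
    exact ⟨∅, Set.finite_empty, Or.inr ⟨x, rfl⟩, fun Y hY => absurd hY (Set.notMem_empty Y)⟩
  | hmu u T ih =>
    intro σ h
    by_cases hu : u ∈ F
    · rw [SType.ssub]
      refine der_zero ?_
      intro Z hZ
      cases hZ with | mu k => exact k hu
    · have hN := fv_ssub (.mu u T) σ F h
      set N := SType.ssub σ (.mu u T) with hNd
      have hN2 : N = .mu u (SType.ssub (Function.update σ u (.tvar u)) T) := by
        rw [hNd, SType.ssub]
      obtain ⟨X, f, m, c⟩ := ih (Function.update σ u N) (by
        intro x y hy
        by_cases e : x = u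
        · subst e; rw [Function.update_self] at hy; exact hN y hy
        · rw [Function.update_of_ne e] at hy; exact h x y hy)
      have s : ∀ Z ∈ X ∪ Set.range (Function.update σ u N), Z ∈ insert N X ∪ Set.range σ := by
        rintro Z (hZ | ⟨x, rfl⟩)
        · exact Or.inl (Or.inr hZ)
        · by_cases e : x = u
          · subst e; rw [Function.update_self]; exact Or.inl (Or.inl rfl)
          · rw [Function.update_of_ne e]; exact Or.inr ⟨x, rfl⟩
      refine ⟨insert N X, f.insert _, Or.inl (Or.inl rfl), ?_⟩
      rintro Y (rfl | hY) Z hZ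
      · apply s
        rw [hN2] at hZ
        cases hZ
        rw [← hN2, subst_ssub, Function.update_idem]
        · exact m
        · simp
        · intro x hx hf
          rw [Function.update_of_ne hx] at hf
          exact hu (h x u hf)
      · exact s _ (c Y hY Z hZ)
  | hdone => intro σ h; rw [SType.ssub]; exact der_zero (fun Z hZ => by cases hZ)
  | herr => intro σ h; rw [SType.ssub]; exact der_zero (fun Z hZ => by cases hZ)
  | hroll => intro σ h; rw [SType.ssub]; exact der_zero (fun Z hZ => by cases hZ)
  | habt => intro σ h; rw [SType.ssub]; exact der_zero (fun Z hZ => by cases hZ)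

theorem der_closed_fin (F : Finset Name) (T : SType) (hF : ∀ x, FV x T → x ∈ F) :
    ∃ X : Set SType, X.Finite ∧ T ∈ X ∧ ∀ Y ∈ X, ∀ Z, Der F Y Z → Z ∈ X := by
  classical
  let σ : Name → SType := fun x => if x ∈ F then .tvar x else .done
  obtain ⟨X, f, m, c⟩ := der_fin F T σ (by
    intro x y hy
    simp only [σ] at hy
    split_ifs at hy with e
    · cases hy; exact e
    · cases hy)
  rw [ssub_id T σ (fun x hx => by simp [σ, hF x hx])] at m
  refine ⟨X ∪ Set.range σ, f.union ?_, m, ?_⟩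
  · refine ((F.finite_toSet.image SType.tvar).insert SType.done).subset ?_
    rintro _ ⟨x, rfl⟩
    simp only [σ]
    split_ifs with e
    · exact Or.inr ⟨x, e, rfl⟩
    · exact Or.inl rfl
  · rintro Y (hY | ⟨x, rfl⟩) Z hZ
    · exact c Y hY Z hZ
    · simp only [σ] at hZ
      split_ifs at hZ <;> cases hZ

theorem der_fv {F : Set Name} {T U : SType} (h : Der F T U) : ∀ x, FV x U → FV x T := by
  intro x hx
  cases h with
  | out => exact .out hx
  | inp => exact .inp hx
  | sel => exact .sel hx
  | brn hb => exact .brn hb hx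
  | chL => exact .chL hx
  | chR => exact .chR hx
  | cmt => exact .cmt hx
  | mu _ => exact (fv_subst _ _ _ x hx).elim id (fun a => .mu a.2 a.1)

theorem der_mono {F G : Set Name} {T U : SType} (h : Der F T U) :
    Der G T U ∨ ∃ u S, T = .mu u S ∧ u ∈ G := by
  cases h with
  | out => exact Or.inl .out
  | inp => exact Or.inl .inp
  | sel => exact Or.inl .sel
  | brn hb => exact Or.inl (.brn hb)
  | chL => exact Or.inl .chL
  | chR => exact Or.inl .chR
  | cmt => exact Or.inl .cmt
  | @mu u S _ =>
    by_cases hu : u ∈ G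
    · exact Or.inr ⟨u, S, rfl, hu⟩
    · exact Or.inl (.mu hu)

theorem reach_fin : ∀ (n : ℕ) (F : Finset Name), F.card = n → ∀ T : SType,
    (∀ x, FV x T → x ∈ F) →
    ∃ X : Set SType, X.Finite ∧ T ∈ X ∧ ∀ Y ∈ X, ∀ Z, Der ∅ Y Z → Z ∈ X := by
  classical
  intro n
  induction n using Nat.strong_induction_on with
  | _ n ih =>
  intro F hn T hF
  obtain ⟨X, f, m, c⟩ := der_closed_fin F T hF
  let Y : Set SType := {S ∈ X | ∀ x, FV x S → x ∈ F}
  have fY : Y.Finite := f.subset (Set.sep_subset _ _)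
  have key : ∀ S ∈ Y, (∃ u C, S = .mu u C ∧ u ∈ F) →
      ∃ X : Set SType, X.Finite ∧ S ∈ X ∧ ∀ Y ∈ X, ∀ Z, Der ∅ Y Z → Z ∈ X := by
    rintro S hS ⟨u, C, rfl, hu⟩
    refine ih (F.erase u).card ?_ (F.erase u) rfl _ ?_
    · rw [← hn]; exact Finset.card_erase_lt_of_mem hu
    · intro x hx
      refine Finset.mem_erase.2 ⟨?_, hS.2 x hx⟩
      cases hx with | mu hne _ => exact hne
  choose! g g1 g2 g3 using key
  let B : Set SType := {S ∈ Y | ∃ u C, S = .mu u C ∧ u ∈ F}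
  have fB : B.Finite := fY.subset (Set.sep_subset _ _)
  refine ⟨Y ∪ ⋃ S ∈ B, g S, fY.union (Set.Finite.biUnion fB (fun S hS => g1 S hS.1 hS.2)),
    Or.inl ⟨m, hF⟩, ?_⟩
  rintro S (hS | hS) Z hZ
  · rcases der_mono (G := (F : Set Name)) hZ with h | h
    · exact Or.inl ⟨c S hS.1 Z h, fun x hx => hS.2 x (der_fv h x hx)⟩
    · have h' : ∃ u C, S = .mu u C ∧ u ∈ F := h
      exact Or.inr (Set.mem_biUnion (show S ∈ B from ⟨hS, h'⟩) (g3 S hS h' S (g2 S hS h') Z hZ))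
  · obtain ⟨V, hV, hS⟩ := Set.mem_iUnion₂.1 hS
    exact Or.inr (Set.mem_biUnion hV (g3 V hV.1 hV.2 S hS Z hZ))

theorem tstep_closed {X : Set SType} (hd : SType.done ∈ X)
    (hX : ∀ Y ∈ X, ∀ Z, Der ∅ Y Z → Z ∈ X) {T U : SType} {a : TLabel}
    (h : TStep T a U) : T ∈ X → U ∈ X := by
  induction h with
  | out => exact fun k => hX _ k _ .out
  | inp => exact fun k => hX _ k _ .inp
  | sel => exact fun k => hX _ k _ .sel
  | brn hb => exact fun k => hX _ k _ (.brn hb)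
  | choiceL => exact fun k => hX _ k _ .chL
  | choiceR => exact fun k => hX _ k _ .chR
  | unfold _ ih => exact fun k => ih (hX _ k _ (.mu (Set.notMem_empty _)))
  | cmt => exact fun k => hX _ k _ .cmt
  | roll => exact fun _ => hd
  | abt => exact fun _ => hd

theorem exists_closed (T : SType) : ∃ X : Set SType, X.Finite ∧ T ∈ X ∧ SType.err ∈ X ∧
    ∀ Y a Z, TStep Y a Z → Y ∈ X → Z ∈ X := by
  obtain ⟨F, hF⟩ := fv_finite T
  obtain ⟨X, f, m, c⟩ := reach_fin _ F rfl T hF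
  refine ⟨insert .err (insert .done X), (f.insert _).insert _, Or.inr (Or.inr m), Or.inl rfl, ?_⟩
  intro Y a Z h
  refine tstep_closed (Or.inr (Or.inl rfl)) ?_ h
  rintro Y (rfl | rfl | hY) Z hZ
  · cases hZ
  · cases hZ
  · exact Or.inr (Or.inr (c Y hY Z hZ))

structure ConfInv (A B : SType) (X Y : Set SType) (c : TConf) : Prop where
  iL : c.initL = A
  iR : c.initR = B
  kL : c.ckpL.ty ∈ X
  cL : c.curL ∈ X
  kR : c.ckpR.ty ∈ Y
  cR : c.curR ∈ Y

theorem ConfInv.swap {A B : SType} {X Y : Set SType} {c : TConf} (h : ConfInv A B X Y c) :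
    ConfInv B A Y X c.swap :=
  ⟨h.iR, h.iL, h.kR, h.cR, h.kL, h.cL⟩

theorem ConfInv.step {c c' : TConf} (h : TCRed c c') : ∀ {A B : SType} {X Y : Set SType},
    A ∈ X → B ∈ Y → SType.err ∈ X → SType.err ∈ Y →
    (∀ U a Z, TStep U a Z → U ∈ X → Z ∈ X) → (∀ U a Z, TStep U a Z → U ∈ Y → Z ∈ Y) →
    ConfInv A B X Y c → ConfInv A B X Y c' := by
  induction h with
  | tau h1 =>
    rintro A B X Y hA hB eX eY sX sY ⟨rfl, rfl, kL, cL, kR, cR⟩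
    exact ⟨rfl, rfl, kL, sX _ _ _ h1 cL, kR, cR⟩
  | com h1 h2 =>
    rintro A B X Y hA hB eX eY sX sY ⟨rfl, rfl, kL, cL, kR, cR⟩
    exact ⟨rfl, rfl, kL, sX _ _ _ h1 cL, kR, sY _ _ _ h2 cR⟩
  | lab h1 h2 =>
    rintro A B X Y hA hB eX eY sX sY ⟨rfl, rfl, kL, cL, kR, cR⟩
    exact ⟨rfl, rfl, kL, sX _ _ _ h1 cL, kR, sY _ _ _ h2 cR⟩
  | cmt1 h1 _ =>
    rintro A B X Y hA hB eX eY sX sY ⟨rfl, rfl, kL, cL, kR, cR⟩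
    exact ⟨rfl, rfl, sX _ _ _ h1 cL, sX _ _ _ h1 cL, cR, cR⟩
  | cmt2 h1 _ =>
    rintro A B X Y hA hB eX eY sX sY ⟨rfl, rfl, kL, cL, kR, cR⟩
    exact ⟨rfl, rfl, sX _ _ _ h1 cL, sX _ _ _ h1 cL, kR, cR⟩
  | rll1 _ =>
    rintro A B X Y hA hB eX eY sX sY ⟨rfl, rfl, kL, cL, kR, cR⟩
    exact ⟨rfl, rfl, kL, kL, kR, kR⟩
  | rll2 _ =>
    rintro A B X Y hA hB eX eY sX sY ⟨rfl, rfl, kL, cL, kR, cR⟩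
    exact ⟨rfl, rfl, kL, eX, kR, eY⟩
  | abt1 _ =>
    rintro A B X Y hA hB eX eY sX sY ⟨rfl, rfl, kL, cL, kR, cR⟩
    exact ⟨rfl, rfl, hA, hA, hB, hB⟩
  | symm _ ih =>
    intro A B X Y hA hB eX eY sX sY h
    exact (ih hB hA eY eX sY sX h.swap).swap

theorem ckp_mem {X : Set SType} {K : CkpT} (h : K.ty ∈ X) :
    K ∈ CkpT.ckp '' X ∪ CkpT.ickp '' X := by
  cases K with
  | ckp T => exact Or.inl ⟨T, h, rfl⟩
  | ickp T => exact Or.inr ⟨T, h, rfl⟩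

/-- **Finiteness of the type transition system**: the set of type
configurations reachable from the initial configuration of two session types
is finite. -/
theorem type_transition_system_finite (T1 T2 : SType) :
    {c : TConf | Relation.ReflTransGen TCRed (initConf T1 T2) c}.Finite := by
  obtain ⟨X, fX, mX, eX, sX⟩ := exists_closed T1
  obtain ⟨Y, fY, mY, eY, sY⟩ := exists_closed T2
  have fKX : (CkpT.ckp '' X ∪ CkpT.ickp '' X).Finite := (fX.image _).union (fX.image _)
  have fKY : (CkpT.ckp '' Y ∪ CkpT.ickp '' Y).Finite := (fY.image _).union (fY.image _)
  refine (((fKX.prod fX).prod (fKY.prod fY)).image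
    (fun p => (⟨T1, T2, p.1.1, p.1.2, p.2.1, p.2.2⟩ : TConf))).subset ?_
  intro c hc
  have inv : ConfInv T1 T2 X Y c := by
    induction (show Relation.ReflTransGen TCRed (initConf T1 T2) c from hc) with
    | refl => exact ⟨rfl, rfl, mX, mX, mY, mY⟩
    | tail h1 h2 ih => exact ConfInv.step h2 mX mY eX eY sX sY (ih h1)
  obtain ⟨iL, iR, kL, cL, kR, cR⟩ := inv
  refine ⟨((c.ckpL, c.curL), (c.ckpR, c.curR)), ⟨⟨ckp_mem kL, cL⟩, ⟨ckp_mem kR, cR⟩⟩, ?_⟩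
  subst iL iR
  rfl
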